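/- arXiv:1108.4078 — 2 statements merged into one kernel-verified Lean document; each statement's English description precedes it below -/
import Mathlib

section
/- Let A ∈ ℝ^{m×n} with rank A ≤ n−1. Then the infimum defining the solution relative magnitude of A is attained: there exists a nonzero x ∈ N(A) with ω(x) = ω(A), that is, ω(A) = min{ω(x) : x ∈ N(A), x ≠ 0}. Moreover ω(A) ≥ 1. -/
/-- The relative magnitude of a nonzero vector: `max {|x j| / |x i| : x i ≠ 0}`. -/
noncomputable def omegaVec {n : ℕ} (x : Fin n → ℝ) : ℝ :=
  sSup {r : ℝ | ∃ i j : Fin n, x i ≠ 0 ∧ r = |x j| / |x i|}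

/-- The solution relative magnitude of a matrix: `inf {ω x : x ∈ N(A), x ≠ 0}`,
with the convention that it is `0` when the null space is trivial
(in Lean, `sInf ∅ = 0` for real numbers). -/
noncomputable def omegaMat {m n : ℕ} (A : Matrix (Fin m) (Fin n) ℝ) : ℝ :=
  sInf {r : ℝ | ∃ x : Fin n → ℝ, x ≠ 0 ∧ A.mulVec x = 0 ∧ r = omegaVec x}

/-- `‖A‖∞`: the maximum row ℓ1 norm of an integer matrix, as a natural number. -/
def normInf {m n : ℕ} (A : Matrix (Fin m) (Fin n) ℤ) : ℕ :=
  Finset.univ.sup fun i => ∑ j, (A i j).natAbs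

/-!
On nonzero vectors `ω x ≤ c` means that every pair `i, j` satisfies `x i = 0 ∨ |x j| ≤ c * |x i|`,
which is a closed condition; so `ω` is lower semicontinuous although it is not continuous (it blows
up when a coordinate tends to `0`). As `ω` is also invariant under scaling, minimizing it over the
nonzero vectors of a closed cone amounts to minimizing it over the unit vectors of the cone, which
form a compact set.
-/

open Set

open scoped Matrix

section RelativeMagnitude

variable {n : ℕ} {x : Fin n → ℝ}

theorem bddAbove_abs_div_abs (x : Fin n → ℝ) :
    BddAbove {r : ℝ | ∃ i j : Fin n, x i ≠ 0 ∧ r = |x j| / |x i|} := by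
  refine ((finite_range fun p : Fin n × Fin n ↦ |x p.2| / |x p.1|).subset ?_).bddAbove
  rintro r ⟨i, j, -, rfl⟩
  exact ⟨(i, j), rfl⟩

theorem omegaVec_le_iff (hx : x ≠ 0) {c : ℝ} :
    omegaVec x ≤ c ↔ ∀ i j, x i = 0 ∨ |x j| ≤ c * |x i| := by
  obtain ⟨k, hk⟩ := Function.ne_iff.mp hx
  have hne : {r : ℝ | ∃ i j : Fin n, x i ≠ 0 ∧ r = |x j| / |x i|}.Nonempty := ⟨_, k, k, hk, rfl⟩
  rw [omegaVec, csSup_le_iff (bddAbove_abs_div_abs x) hne]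
  constructor
  · intro h i j
    refine or_iff_not_imp_left.mpr fun hi ↦ ?_
    exact (div_le_iff₀ (abs_pos.mpr hi)).mp (h _ ⟨i, j, hi, rfl⟩)
  · rintro h r ⟨i, j, hi, rfl⟩
    exact (div_le_iff₀ (abs_pos.mpr hi)).mpr ((h i j).resolve_left hi)

theorem one_le_omegaVec (hx : x ≠ 0) : 1 ≤ omegaVec x := by
  obtain ⟨i, hi⟩ := Function.ne_iff.mp hx
  exact le_csSup (bddAbove_abs_div_abs x) ⟨i, i, hi, (div_self (abs_ne_zero.mpr hi)).symm⟩

theorem omegaVec_smul {c : ℝ} (hc : c ≠ 0) (x : Fin n → ℝ) :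
    omegaVec (c • x) = omegaVec x := by
  simp only [omegaVec, Pi.smul_apply, smul_eq_mul, abs_mul, mul_ne_zero_iff_left hc,
    mul_div_mul_left _ _ (abs_ne_zero.mpr hc)]

theorem lowerSemicontinuousOn_omegaVec :
    LowerSemicontinuousOn (omegaVec (n := n)) {0}ᶜ := by
  refine lowerSemicontinuousOn_iff_preimage_Iic.mpr fun c ↦
    ⟨{x | ∀ i j, x i = 0 ∨ |x j| ≤ c * |x i|}, ?_, ?_⟩
  · simp only [ofPred_forall, ofPred_or]
    refine isClosed_iInter fun i ↦ isClosed_iInter fun j ↦ ?_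
    exact (isClosed_eq (by fun_prop) (by fun_prop)).union
      (isClosed_le (by fun_prop) (by fun_prop))
  · ext x
    exact and_congr_right fun hx ↦ omegaVec_le_iff hx

theorem exists_isMinOn_omegaVec {C : Set (Fin n → ℝ)} (hclosed : IsClosed C)
    (hsmul : ∀ c : ℝ, 0 < c → ∀ x ∈ C, c • x ∈ C) (hne : (C \ {0}).Nonempty) :
    ∃ x ∈ C \ {0}, IsMinOn omegaVec (C \ {0}) x := by
  have hcompact : IsCompact (C ∩ Metric.sphere 0 1) := (isCompact_sphere 0 1).inter_left hclosed
  have hsub : C ∩ Metric.sphere 0 1 ⊆ C \ {0} := fun x hx ↦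
    ⟨hx.1, ne_zero_of_mem_unit_sphere ⟨x, hx.2⟩⟩
  have hnormalize : ∀ y ∈ C \ {0}, ‖y‖⁻¹ • y ∈ C ∩ Metric.sphere 0 1 := fun y hy ↦
    ⟨hsmul _ (inv_pos.mpr (norm_pos_iff.mpr hy.2)) y hy.1,
      mem_sphere_zero_iff_norm.mpr (norm_smul_inv_norm hy.2)⟩
  obtain ⟨z, hz⟩ := hne
  obtain ⟨x, hx, hmin⟩ := LowerSemicontinuousOn.exists_isMinOn ⟨_, hnormalize z hz⟩ hcompact
    (lowerSemicontinuousOn_omegaVec.mono fun y hy ↦ (hsub hy).2)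
  refine ⟨x, hsub hx, fun y hy ↦ ?_⟩
  calc omegaVec x ≤ omegaVec (‖y‖⁻¹ • y) := hmin (hnormalize y hy)
    _ = omegaVec y := omegaVec_smul (inv_ne_zero (norm_ne_zero_iff.mpr hy.2)) y

theorem stmt5_general {C : Set (Fin n → ℝ)} (hclosed : IsClosed C)
    (hsmul : ∀ c : ℝ, 0 < c → ∀ x ∈ C, c • x ∈ C) (hne : ∃ x, x ≠ 0 ∧ x ∈ C) :
    (∃ x, x ≠ 0 ∧ x ∈ C ∧ omegaVec x = sInf {r | ∃ x, x ≠ 0 ∧ x ∈ C ∧ r = omegaVec x}) ∧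
    1 ≤ sInf {r | ∃ x, x ≠ 0 ∧ x ∈ C ∧ r = omegaVec x} := by
  obtain ⟨z, hz, hzC⟩ := hne
  obtain ⟨x, ⟨hxC, hx⟩, hmin⟩ := exists_isMinOn_omegaVec hclosed hsmul ⟨z, hzC, hz⟩
  have hleast : IsLeast {r | ∃ x, x ≠ 0 ∧ x ∈ C ∧ r = omegaVec x} (omegaVec x) := by
    refine ⟨⟨x, hx, hxC, rfl⟩, ?_⟩
    rintro r ⟨y, hy, hyC, rfl⟩
    exact hmin ⟨hyC, hy⟩
  rw [hleast.csInf_eq]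
  exact ⟨⟨x, hx, hxC, rfl⟩, one_le_omegaVec hx⟩

end RelativeMagnitude

theorem exists_mulVec_eq_zero_of_rank_lt_card {m n K : Type*} [Fintype n] [Field K]
    {A : Matrix m n K} (hA : A.rank < Fintype.card n) : ∃ x, x ≠ 0 ∧ A *ᵥ x = 0 := by
  rw [← Module.finrank_fintype_fun_eq_card K] at hA
  have hker : LinearMap.ker A.mulVecLin ≠ ⊥ := by
    rw [← LinearMap.ker_rangeRestrict]
    exact LinearMap.ker_ne_bot_of_finrank_lt hA
  obtain ⟨x, hx, hx0⟩ := Submodule.exists_mem_ne_zero_of_ne_bot hker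
  exact ⟨x, hx0, hx⟩

theorem stmt5 {m n : ℕ} (A : Matrix (Fin m) (Fin n) ℝ) (hrank : A.rank < n) :
    (∃ x : Fin n → ℝ, x ≠ 0 ∧ A.mulVec x = 0 ∧ omegaVec x = omegaMat A) ∧
    1 ≤ omegaMat A :=
  stmt5_general (C := {x | A *ᵥ x = 0}) (isClosed_eq (by fun_prop) continuous_const)
    (fun c _ x (hx : A *ᵥ x = 0) ↦ by simp [Matrix.mulVec_smul, hx])
    (exists_mulVec_eq_zero_of_rank_lt_card (by simpa using hrank))
end

section
/- Let A ∈ ℤ^{m×n} with rank A ≤ n−1 and ‖A‖∞ ≥ 3, and let x be a nonzero elementary vector of the null space N(A), with support I := supp(x). Then |I| − 1 ≤ rank A and ω(x) ≤ (‖A‖∞ − 1)^{|I|−1}. -/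
/-!
Schinzel's inequality bounds a determinant by the product over its rows of the larger of the sum of
positive parts and the sum of negative parts. It follows by induction from the Laplace expansion
`∑ c, v c * l c` along a row `v`: the cofactors `l c` obey the inductive bound `b`, and so do their
differences, since `l c - l d` is up to sign the minor obtained by merging column `c` into column
`d`; a linear functional with these two properties is at most `b` times the row size of `v`.

If `A x = 0` and the columns of `A` are multiplied by the signs of `x`, every row that does not
vanish on the support of `x` has entries of both signs, so for an integer matrix its row size is at
most `‖A‖∞ - 1`. For elementary `x` and `x i ≠ 0`, the columns of `A` indexed by `supp x \ {i}` are
independent, so they contain a nonzero minor of order `|supp x| - 1`, of absolute value at least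
`1`. Cramer's rule expresses `x j / x i` as a quotient of minors with this denominator, and
Schinzel's inequality bounds the numerator by `(‖A‖∞ - 1) ^ (|supp x| - 1)`.
-/

open Function Matrix

section MaxSignSum

theorem posPart_add_le {α : Type*} [AddCommGroup α] [Lattice α] [IsOrderedAddMonoid α] (a b : α) :
    (a + b)⁺ ≤ a⁺ + b⁺ :=
  sup_le (add_le_add (le_posPart a) (le_posPart b))
    (add_nonneg (posPart_nonneg a) (posPart_nonneg b))

theorem negPart_add_le {α : Type*} [AddCommGroup α] [Lattice α] [IsOrderedAddMonoid α] (a b : α) :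
    (a + b)⁻ ≤ a⁻ + b⁻ := by
  simpa only [← posPart_neg, neg_add] using posPart_add_le (-a) (-b)

theorem sum_comp_le_sum_of_injective {ι κ M : Type*} [Fintype ι] [Fintype κ] [AddCommMonoid M]
    [PartialOrder M] [IsOrderedAddMonoid M] {f : ι → M} (hf : ∀ q, 0 ≤ f q)
    {g : κ → ι} (hg : Injective g) : ∑ k, f (g k) ≤ ∑ q, f q :=
  (Finset.sum_map Finset.univ ⟨g, hg⟩ f).symm.trans_le (Finset.sum_le_univ_sum_of_nonneg hf)

theorem sum_update_add_comp_succAbove_le {n : ℕ} {M N : Type*} [Add M] [AddCommMonoid N]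
    [PartialOrder N] [IsOrderedCancelAddMonoid N] {φ : M → N}
    (hφ : ∀ a b, φ (a + b) ≤ φ a + φ b) (v : Fin (n + 1) → M) {c d : Fin (n + 1)} (hcd : c ≠ d) :
    ∑ p, φ (update v d (v d + v c) (c.succAbove p)) ≤ ∑ q, φ (v q) := by
  refine le_of_add_le_add_left (a := φ (v c)) ?_
  calc φ (v c) + ∑ p, φ (update v d (v d + v c) (c.succAbove p))
      = ∑ q, φ (update v d (v d + v c) q) := by
        rw [Fin.sum_univ_succAbove _ c, update_of_ne hcd]
    _ = φ (v d + v c) + ∑ q ∈ {d}ᶜ, φ (v q) := by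
        rw [Fintype.sum_eq_add_sum_compl d, update_self]
        congr 1
        exact Finset.sum_congr rfl fun q hq ↦ by rw [update_of_ne (by simpa using hq)]
    _ ≤ φ (v c) + φ (v d) + ∑ q ∈ {d}ᶜ, φ (v q) := by
        rw [add_comm (φ (v c))]
        exact add_le_add_left (hφ _ _) _
    _ = φ (v c) + ∑ q, φ (v q) := by
        rw [add_assoc, ← Fintype.sum_eq_add_sum_compl d fun q ↦ φ (v q)]

variable {G ι κ : Type*} [AddCommGroup G] [LinearOrder G] [IsOrderedAddMonoid G]
  [Fintype ι] [Fintype κ]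

/-- The larger of the sum of the positive entries of `v` and the sum of the absolute values of its
negative entries: the size of a row in Schinzel's determinant inequality. -/
def maxSignSum (v : ι → G) : G :=
  max (∑ q, (v q)⁺) (∑ q, (v q)⁻)

theorem maxSignSum_nonneg (v : ι → G) : 0 ≤ maxSignSum v :=
  le_max_of_le_left (Finset.sum_nonneg fun q _ ↦ posPart_nonneg (v q))

theorem maxSignSum_comp_le {g : κ → ι} (hg : Injective g) (v : ι → G) :
    maxSignSum (v ∘ g) ≤ maxSignSum v :=
  max_le_max (sum_comp_le_sum_of_injective (fun q ↦ posPart_nonneg (v q)) hg)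
    (sum_comp_le_sum_of_injective (fun q ↦ negPart_nonneg (v q)) hg)

theorem maxSignSum_update_add_comp_succAbove_le {n : ℕ} (v : Fin (n + 1) → G) {c d : Fin (n + 1)}
    (hcd : c ≠ d) :
    maxSignSum (update v d (v d + v c) ∘ c.succAbove) ≤ maxSignSum v :=
  max_le_max (sum_update_add_comp_succAbove_le posPart_add_le v hcd)
    (sum_update_add_comp_succAbove_le negPart_add_le v hcd)

variable {R : Type*} [CommRing R] [LinearOrder R] [IsStrictOrderedRing R]

theorem sum_mul_le_maxSignSum_mul [Nonempty ι] (v : ι → R) {l : ι → R} {b : R}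
    (hl : ∀ q, |l q| ≤ b) (hsub : ∀ c d, l c - l d ≤ b) :
    ∑ q, v q * l q ≤ maxSignSum v * b := by
  obtain ⟨c, hc⟩ := Finite.exists_max l
  obtain ⟨d, hd⟩ := Finite.exists_min l
  have hbound : (l c)⁺ + (l d)⁻ ≤ b := by
    have hc_le := abs_le.1 (hl c)
    have hd_le := abs_le.1 (hl d)
    rcases le_total 0 (l c) with h₁ | h₁ <;> rcases le_total 0 (l d) with h₂ | h₂ <;>
      simp only [posPart_of_nonneg, posPart_of_nonpos, negPart_of_nonneg, negPart_of_nonpos,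
        h₁, h₂] <;> linarith [hsub c d]
  have hterm (q) : v q * l q ≤ (v q)⁺ * (l c)⁺ + (v q)⁻ * (l d)⁻ := by
    have hpos := mul_le_mul_of_nonneg_left ((hc q).trans (le_posPart _)) (posPart_nonneg (v q))
    have hneg := mul_le_mul_of_nonneg_left ((neg_le_neg (hd q)).trans (neg_le_negPart _))
      (negPart_nonneg (v q))
    calc v q * l q = (v q)⁺ * l q + (v q)⁻ * -l q := by
          rw [mul_neg, ← sub_eq_add_neg, ← sub_mul, posPart_sub_negPart]
      _ ≤ _ := add_le_add hpos hneg
  calc ∑ q, v q * l q ≤ ∑ q, ((v q)⁺ * (l c)⁺ + (v q)⁻ * (l d)⁻) :=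
        Finset.sum_le_sum fun q _ ↦ hterm q
    _ = (∑ q, (v q)⁺) * (l c)⁺ + (∑ q, (v q)⁻) * (l d)⁻ := by
        rw [Finset.sum_add_distrib, Finset.sum_mul, Finset.sum_mul]
    _ ≤ maxSignSum v * (l c)⁺ + maxSignSum v * (l d)⁻ :=
        add_le_add (mul_le_mul_of_nonneg_right (le_max_left _ _) (posPart_nonneg _))
          (mul_le_mul_of_nonneg_right (le_max_right _ _) (negPart_nonneg _))
    _ = maxSignSum v * ((l c)⁺ + (l d)⁻) := (mul_add _ _ _).symm
    _ ≤ maxSignSum v * b := mul_le_mul_of_nonneg_left hbound (maxSignSum_nonneg v)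

theorem abs_sum_mul_le_maxSignSum_mul [Nonempty ι] (v : ι → R) {l : ι → R} {b : R}
    (hl : ∀ q, |l q| ≤ b) (hsub : ∀ c d, l c - l d ≤ b) :
    |∑ q, v q * l q| ≤ maxSignSum v * b := by
  refine abs_le'.2 ⟨sum_mul_le_maxSignSum_mul v hl hsub, ?_⟩
  simpa only [Pi.neg_apply, mul_neg, Finset.sum_neg_distrib] using
    sum_mul_le_maxSignSum_mul v (l := -l) (fun q ↦ (abs_neg (l q)).trans_le (hl q))
      fun c d ↦ (neg_sub_neg (l c) (l d)).trans_le (hsub d c)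

end MaxSignSum

section Schinzel

variable {R : Type*} [CommRing R]

theorem adjugate_sub_adjugate {ι : Type*} [Fintype ι] [DecidableEq ι] (M : Matrix ι ι R) (i : ι)
    {c d : ι} (hcd : c ≠ d) :
    M.adjugate c i - M.adjugate d i =
      (M.updateCol d fun r ↦ M r d + M r c).adjugate c i := by
  let N := M.updateRow i (Pi.single c 1 - Pi.single d 1)
  have hmerge : N.updateCol d (fun r ↦ N r d + N r c) =
      (M.updateCol d fun r ↦ M r d + M r c).updateRow i (Pi.single c 1) := by
    ext r q
    by_cases hr : r = i <;> by_cases hq : q = d <;> simp [N, hr, hq, hcd, hcd.symm]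
  calc M.adjugate c i - M.adjugate d i = N.det := by
        rw [adjugate_apply, adjugate_apply]
        exact (detRowAlternating.map_update_sub M i _ _).symm
    _ = (M.updateCol d fun r ↦ M r d + M r c).adjugate c i := by
        rw [adjugate_apply, ← hmerge, det_updateCol_add_self _ hcd.symm]

variable [LinearOrder R] [IsStrictOrderedRing R]

theorem abs_adjugate_fin_succ {n : ℕ} (M : Matrix (Fin (n + 1)) (Fin (n + 1)) R)
    (i j : Fin (n + 1)) :
    |M.adjugate i j| = |(M.submatrix j.succAbove i.succAbove).det| := by
  rw [adjugate_fin_succ_eq_det_submatrix, abs_mul, abs_pow, abs_neg, abs_one, one_pow, one_mul]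

theorem abs_det_le_prod_maxSignSum_fin {n : ℕ} (M : Matrix (Fin n) (Fin n) R) :
    |M.det| ≤ ∏ r, maxSignSum (M r) := by
  induction n with
  | zero => simp
  | succ n ih =>
    set b := ∏ r : Fin n, maxSignSum (M r.succ)
    have hprod {N : Matrix (Fin n) (Fin n) R} (hN : ∀ r, maxSignSum (N r) ≤ maxSignSum (M r.succ)) :
        |N.det| ≤ b :=
      (ih N).trans (Finset.prod_le_prod (fun r _ ↦ maxSignSum_nonneg _) fun r _ ↦ hN r)
    have hadj (c) : |M.adjugate c 0| ≤ b := by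
      rw [abs_adjugate_fin_succ]
      exact hprod fun r ↦ maxSignSum_comp_le c.succAbove_right_injective (M r.succ)
    have hsub (c d) : M.adjugate c 0 - M.adjugate d 0 ≤ b := by
      rcases eq_or_ne c d with rfl | hcd
      · simpa using (abs_nonneg _).trans (hadj c)
      rw [adjugate_sub_adjugate M 0 hcd]
      refine (le_abs_self _).trans ?_
      rw [abs_adjugate_fin_succ]
      refine hprod fun r ↦ ?_
      exact maxSignSum_update_add_comp_succAbove_le (M r.succ) hcd
    rw [det_eq_sum_mul_adjugate_row M 0, Fin.prod_univ_succ]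
    exact abs_sum_mul_le_maxSignSum_mul (M 0) hadj hsub

theorem abs_det_le_prod_maxSignSum {κ : Type*} [Fintype κ] [DecidableEq κ] (M : Matrix κ κ R) :
    |M.det| ≤ ∏ r, maxSignSum (M r) := by
  let e := (Fintype.equivFin κ).symm
  calc |M.det| = |(M.submatrix e e).det| := by rw [det_submatrix_equiv_self]
    _ ≤ ∏ r, maxSignSum (M (e r) ∘ e) := abs_det_le_prod_maxSignSum_fin _
    _ ≤ ∏ r, maxSignSum (M (e r)) :=
        Finset.prod_le_prod (fun r _ ↦ maxSignSum_nonneg _)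
          fun r _ ↦ maxSignSum_comp_le e.injective _
    _ = ∏ r, maxSignSum (M r) := e.prod_comp fun r ↦ maxSignSum (M r)

end Schinzel

section IntegerRows

variable {R ι κ μ : Type*} [CommRing R] [LinearOrder R] [IsStrictOrderedRing R]
  [Fintype ι] [Fintype κ] [DecidableEq κ]

theorem maxSignSum_le_sum_abs_sub_one {v : ι → ℤ} {c d : ι} (hc : 0 < v c) (hd : v d < 0) :
    maxSignSum v ≤ ∑ q, |v q| - 1 := by
  have hpos : 1 ≤ ∑ q, (v q)⁺ := (Int.add_one_le_of_lt hc).trans <| (le_posPart _).trans <|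
    Finset.single_le_sum (fun q _ ↦ posPart_nonneg (v q)) (Finset.mem_univ c)
  have hneg : 1 ≤ ∑ q, (v q)⁻ :=
    (Int.add_one_le_of_lt (neg_pos.2 hd)).trans <| (neg_le_negPart _).trans <|
      Finset.single_le_sum (fun q _ ↦ negPart_nonneg (v q)) (Finset.mem_univ d)
  have habs : ∑ q, |v q| = ∑ q, (v q)⁺ + ∑ q, (v q)⁻ := by
    simp only [← posPart_add_negPart, Finset.sum_add_distrib]
  exact max_le (by linarith) (by linarith)

theorem exists_pos_of_sum_mul_eq_zero {v w : ι → R} (hw : ∀ q, 0 ≤ w q)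
    (hsum : ∑ q, v q * w q = 0) (hne : ∃ q, v q * w q ≠ 0) : ∃ c, 0 < v c := by
  obtain ⟨q, hq⟩ := hne
  obtain ⟨c, -, hc⟩ :=
    Finset.exists_pos_of_sum_zero_of_exists_nonzero _ hsum ⟨q, Finset.mem_univ q, hq⟩
  exact ⟨c, pos_of_mul_pos_left hc (hw c)⟩

theorem maxSignSum_mul_sign_le {a : ι → ℤ} {x : ι → R} (hax : ∑ q, (a q : R) * x q = 0)
    (hne : ∃ q, a q ≠ 0 ∧ x q ≠ 0) :
    maxSignSum (fun q ↦ a q * (SignType.sign (x q) : ℤ)) ≤ ∑ q, |a q| - 1 := by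
  set v : ι → ℤ := fun q ↦ a q * (SignType.sign (x q) : ℤ) with hv
  have hvx (q) : (v q : R) * |x q| = a q * x q := by
    rcases lt_trichotomy (x q) 0 with h | h | h <;> simp [hv, h, abs_of_neg, abs_of_pos]
  have hsum : ∑ q, (v q : R) * |x q| = 0 := by simpa only [hvx] using hax
  have hne' : ∃ q, (v q : R) * |x q| ≠ 0 := by simpa only [hvx, mul_ne_zero_iff, Int.cast_ne_zero]
  obtain ⟨c, hc⟩ := exists_pos_of_sum_mul_eq_zero (fun q ↦ abs_nonneg (x q)) hsum hne'
  obtain ⟨d, hd⟩ := exists_pos_of_sum_mul_eq_zero (v := fun q ↦ -(v q : R))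
    (fun q ↦ abs_nonneg (x q)) (by simpa [neg_mul] using hsum) (by simpa [neg_mul] using hne')
  refine (maxSignSum_le_sum_abs_sub_one (Int.cast_pos.1 hc)
    (Int.cast_lt_zero.1 (neg_pos.1 hd))).trans (sub_le_sub_right ?_ 1)
  refine Finset.sum_le_sum fun q _ ↦ ?_
  rcases lt_trichotomy (x q) 0 with h | h | h <;> simp [hv, h]

theorem abs_det_submatrix_le_pow {A : Matrix μ ι ℤ} {x : ι → R}
    (hker : A.map (Int.cast : ℤ → R) *ᵥ x = 0) {D : ℤ} (hD : ∀ r, ∑ q, |A r q| ≤ D)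
    {f : κ → μ} (hf : ∀ k, ∃ q, A (f k) q ≠ 0 ∧ x q ≠ 0)
    {g : κ → ι} (hg : Injective g) (hxg : ∀ k, x (g k) ≠ 0) :
    |(A.submatrix f g).det| ≤ (D - 1) ^ Fintype.card κ := by
  let s : ι → ℤ := fun q ↦ (SignType.sign (x q) : ℤ)
  have hs (k) : |s (g k)| = 1 := by
    rcases lt_or_gt_of_ne (hxg k) with h | h <;> simp [s, h]
  have hflip : |(of fun k l ↦ s (g l) * A.submatrix f g k l).det| = |(A.submatrix f g).det| := by
    rw [det_mul_row, abs_mul, Finset.abs_prod]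
    simp only [hs, Finset.prod_const_one, one_mul]
  have hrow (k) : maxSignSum (fun l ↦ s (g l) * A.submatrix f g k l) ≤ D - 1 := by
    have hax : ∑ q, (A (f k) q : R) * x q = 0 := congrFun hker (f k)
    calc maxSignSum (fun l ↦ s (g l) * A.submatrix f g k l)
        = maxSignSum ((fun q ↦ A (f k) q * s q) ∘ g) := by
          simp only [comp_def, submatrix_apply, mul_comm]
      _ ≤ maxSignSum (fun q ↦ A (f k) q * s q) := maxSignSum_comp_le hg _
      _ ≤ ∑ q, |A (f k) q| - 1 := maxSignSum_mul_sign_le hax (hf k)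
      _ ≤ D - 1 := sub_le_sub_right (hD (f k)) 1
  calc |(A.submatrix f g).det| ≤ ∏ k, maxSignSum (fun l ↦ s (g l) * A.submatrix f g k l) :=
        hflip ▸ abs_det_le_prod_maxSignSum _
    _ ≤ ∏ _k : κ, (D - 1) :=
        Finset.prod_le_prod (fun _ _ ↦ maxSignSum_nonneg _) fun k _ ↦ hrow k
    _ = (D - 1) ^ Fintype.card κ := Finset.prod_const _

end IntegerRows

section ElementaryVector

/-- An elementary vector of a subspace `W`: a nonzero vector of `W` whose support is minimal among
the supports of nonzero vectors of `W`. -/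
structure IsElementary {K ι : Type*} [Field K] (W : Submodule K (ι → K)) (x : ι → K) : Prop where
  mem : x ∈ W
  ne_zero : x ≠ 0
  support_eq : ∀ y ∈ W, y ≠ 0 → support y ⊆ support x → support y = support x

variable {K ι μ : Type*} [Field K]

theorem IsElementary.eq_zero_of_support_subset_sdiff {W : Submodule K (ι → K)} {x y : ι → K}
    (hx : IsElementary W x) (hy : y ∈ W) {i : ι} (hyx : support y ⊆ support x \ {i})
    (hi : x i ≠ 0) : y = 0 := by
  by_contra hne
  have hiy : i ∈ support y := hx.support_eq y hy hne (hyx.trans Set.sdiff_subset) ▸ hi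
  exact (hyx hiy).2 rfl

variable [Fintype ι]

theorem IsElementary.linearIndepOn_col {A : Matrix μ ι K} {x : ι → K}
    (hx : IsElementary (LinearMap.ker A.mulVecLin) x) {i : ι} (hi : x i ≠ 0) :
    LinearIndepOn K A.col (support x \ {i}) := by
  refine linearIndepOn_iff.2 fun l hl hAl ↦ DFunLike.coe_injective ?_
  refine hx.eq_zero_of_support_subset_sdiff ?_ (by simpa [Finsupp.mem_supported] using hl) hi
  rw [LinearMap.mem_ker, mulVecLin_apply, mulVec_eq_sum]
  simpa [Finsupp.linearCombination_apply, Finsupp.sum_fintype] using! hAl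

theorem IsElementary.ncard_support_sub_one_le_rank [Finite μ] {A : Matrix μ ι K} {x : ι → K}
    (hx : IsElementary (LinearMap.ker A.mulVecLin) x) : (support x).ncard - 1 ≤ A.rank := by
  classical
  have := Fintype.ofFinite μ
  obtain ⟨i, hi⟩ := Function.ne_iff.1 hx.ne_zero
  rw [← Set.ncard_sdiff_singleton_of_mem (mem_support.2 hi), ← Nat.card_coe_set_eq,
    Nat.card_eq_fintype_card]
  rw [rank_eq_finrank_span_cols, ← finrank_span_eq_card (hx.linearIndepOn_col hi)]
  exact Submodule.finrank_mono (Submodule.span_mono (Set.range_comp_subset_range _ _))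

theorem exists_submatrix_det_ne_zero [Finite μ] [DecidableEq ι] {A : Matrix μ ι K}
    (hA : LinearIndependent K A.col) : ∃ f : ι → μ, (A.submatrix f id).det ≠ 0 := by
  have := Fintype.ofFinite μ
  obtain ⟨κ, f, hf, hspan, hind⟩ := exists_linearIndependent' K A.row
  have := Fintype.ofInjective f hf
  have hcard : Fintype.card ι = Fintype.card κ := by
    rw [← finrank_span_eq_card hind, hspan, ← rank_eq_finrank_span_row, ← rank_transpose]
    exact (LinearIndependent.rank_matrix hA).symm
  let e := Fintype.equivOfCardEq hcard
  have hrows : LinearIndependent K (A.submatrix (f ∘ e) id).row := hind.comp e e.injective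
  exact ⟨f ∘ e, ((isUnit_iff_isUnit_det _).1 (linearIndependent_rows_iff_isUnit.1 hrows)).ne_zero⟩

theorem cramer_mulVec {R : Type*} [CommRing R] [DecidableEq ι] (A : Matrix ι ι R) (y : ι → R) :
    A.cramer (A *ᵥ y) = A.det • y := by
  rw [cramer_eq_adjugate_mulVec, mulVec_mulVec, adjugate_mul, smul_mulVec, one_mulVec]

theorem sum_mul_eq_add_sum_support_sdiff {R : Type*} [CommRing R] (a x : ι → R) (i : ι)
    [Fintype ↥(support x \ {i})] :
    ∑ q, a q * x q = a i * x i + ∑ q : ↥(support x \ {i}), a q * x q := by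
  classical
  rw [Fintype.sum_eq_add_sum_compl i,
    Finset.sum_set_coe (f := fun q ↦ a q * x q) (support x \ {i})]
  congr 1
  refine (Finset.sum_subset (fun q hq ↦ ?_) fun q hqi hq ↦ ?_).symm
  · simpa using (Set.mem_toFinset.1 hq).2
  · have hxq : x q = 0 := by simpa [show q ≠ i by simpa using hqi] using hq
    rw [hxq, mul_zero]

theorem det_submatrix_mul_apply {R : Type*} [CommRing R] [DecidableEq ι] {A : Matrix μ ι R}
    {x : ι → R} (hker : A *ᵥ x = 0) {i : ι} [Fintype ↥(support x \ {i})]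
    (f : ↥(support x \ {i}) → μ) (j : ↥(support x \ {i})) :
    (A.submatrix f (↑)).det * x j = -x i * (A.submatrix f (update (↑) j i)).det := by
  set C := A.submatrix f ((↑) : ↥(support x \ {i}) → ι)
  have hC : C *ᵥ (fun q ↦ x q) = -x i • fun r ↦ A (f r) i := by
    ext r
    have hr : ∑ q, A (f r) q * x q = 0 := congrFun hker (f r)
    rw [sum_mul_eq_add_sum_support_sdiff _ x i] at hr
    simpa [C, mulVec, dotProduct, mul_comm] using eq_neg_of_add_eq_zero_right hr
  have hupdate : C.updateCol j (fun r ↦ A (f r) i) = A.submatrix f (update (↑) j i) := by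
    ext r q
    by_cases hq : q = j <;> simp [C, hq]
  calc C.det * x j = C.cramer (C *ᵥ fun q ↦ x q) j := by rw [cramer_mulVec]; rfl
    _ = -x i * (A.submatrix f (update (↑) j i)).det := by
        rw [hC, map_smul, Pi.smul_apply, smul_eq_mul, cramer_apply, hupdate]

end ElementaryVector

section Magnitude

theorem injective_update_of_notMem_range {α β : Type*} [DecidableEq α] {g : α → β}
    (hg : Injective g) (a : α) {b : β} (hb : b ∉ Set.range g) : Injective (update g a b) := by
  have hne (c) : g c ≠ b := fun hc ↦ hb ⟨c, hc⟩
  intro c d hcd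
  by_cases hc : c = a <;> by_cases hd : d = a <;> simp_all [hg.eq_iff, eq_comm (a := b)]

variable {ι μ : Type*} [Fintype ι]

theorem abs_det_submatrix_mul_abs_apply_le {R : Type*} [CommRing R] [LinearOrder R]
    [IsStrictOrderedRing R] {A : Matrix μ ι ℤ} {x : ι → R}
    (hker : A.map (Int.cast : ℤ → R) *ᵥ x = 0) {D : ℤ} (hD : ∀ r, ∑ q, |A r q| ≤ D) {i : ι}
    (hi : x i ≠ 0) [Fintype ↥(support x \ {i})] [DecidableEq ι] {f : ↥(support x \ {i}) → μ}
    (hf : ∀ k, ∃ q, A (f k) q ≠ 0 ∧ x q ≠ 0) (j : ι) :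
    |((A.submatrix f (↑)).det : R)| * |x j| ≤
      ((D : R) - 1) ^ Fintype.card ↥(support x \ {i}) * |x i| := by
  have hminor {g : ↥(support x \ {i}) → ι} (hg : Injective g) (hxg : ∀ k, x (g k) ≠ 0) :
      |((A.submatrix f g).det : R)| ≤ ((D : R) - 1) ^ Fintype.card ↥(support x \ {i}) := by
    exact_mod_cast abs_det_submatrix_le_pow hker hD hf hg hxg
  by_cases hj : j ∈ support x \ {i}
  · have hinj : Injective (update ((↑) : ↥(support x \ {i}) → ι) ⟨j, hj⟩ i) :=
      injective_update_of_notMem_range Subtype.val_injective _ (by simp)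
    have hne (k) : x (update ((↑) : ↥(support x \ {i}) → ι) ⟨j, hj⟩ i k) ≠ 0 := by
      rcases eq_or_ne k ⟨j, hj⟩ with rfl | hk
      · rwa [update_self]
      · rw [update_of_ne hk]
        exact k.2.1
    calc |((A.submatrix f (↑)).det : R)| * |x j|
        = |((A.submatrix f (update (↑) ⟨j, hj⟩ i)).det : R)| * |x i| := by
          simpa only [submatrix_map, ← Int.cast_det, abs_mul, abs_neg, mul_comm |x i|] using
            congrArg abs (det_submatrix_mul_apply hker f ⟨j, hj⟩)
      _ ≤ _ := mul_le_mul_of_nonneg_right (hminor hinj hne) (abs_nonneg _)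
  · have hji : |x j| ≤ |x i| := by
      by_cases hxj : x j = 0
      · simp [hxj]
      · rw [not_not.1 fun hne ↦ hj ⟨hxj, hne⟩]
    exact mul_le_mul (hminor Subtype.val_injective fun k ↦ k.2.1) hji (abs_nonneg _)
      ((abs_nonneg _).trans (hminor Subtype.val_injective fun k ↦ k.2.1))

variable {K : Type*} [Field K] [LinearOrder K] [IsStrictOrderedRing K]

theorem IsElementary.abs_apply_le [Finite μ] {A : Matrix μ ι ℤ} {x : ι → K}
    (hx : IsElementary (LinearMap.ker (A.map (Int.cast : ℤ → K)).mulVecLin) x)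
    {D : ℤ} (hD : ∀ r, ∑ q, |A r q| ≤ D) {i : ι} (hi : x i ≠ 0) (j : ι) :
    |x j| ≤ ((D : K) - 1) ^ ((support x).ncard - 1) * |x i| := by
  classical
  obtain ⟨f, hdet⟩ := exists_submatrix_det_ne_zero
    (A := (A.map (Int.cast : ℤ → K)).submatrix id ((↑) : ↥(support x \ {i}) → ι))
    (hx.linearIndepOn_col hi)
  replace hdet : (A.submatrix f ((↑) : ↥(support x \ {i}) → ι)).det ≠ 0 :=
    fun h ↦ hdet ((Int.cast_det _).symm.trans (Int.cast_eq_zero.2 h))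
  have hone : (1 : K) ≤ |((A.submatrix f (↑)).det : K)| := by
    exact_mod_cast Int.one_le_abs hdet
  have hf (k) : ∃ q, A (f k) q ≠ 0 ∧ x q ≠ 0 := by
    by_contra! h
    exact hdet (det_eq_zero_of_row_eq_zero k fun q ↦ not_imp_comm.1 (h q) q.2.1)
  have hcard : Fintype.card ↥(support x \ {i}) = (support x).ncard - 1 := by
    rw [← Nat.card_eq_fintype_card, Nat.card_coe_set_eq, Set.ncard_sdiff_singleton_of_mem hi]
  calc |x j| ≤ |((A.submatrix f (↑)).det : K)| * |x j| :=
        le_mul_of_one_le_left (abs_nonneg _) hone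
    _ ≤ ((D : K) - 1) ^ Fintype.card ↥(support x \ {i}) * |x i| :=
        abs_det_submatrix_mul_abs_apply_le hx.mem hD hi hf j
    _ = ((D : K) - 1) ^ ((support x).ncard - 1) * |x i| := by rw [hcard]

end Magnitude

section RelativeMagnitude

variable {m n : ℕ}

theorem sum_abs_le_normInf (A : Matrix (Fin m) (Fin n) ℤ) (i : Fin m) :
    ∑ j, |A i j| ≤ (normInf A : ℤ) := by
  simpa only [normInf, Nat.cast_sum, Int.natCast_natAbs] using Int.ofNat_le.2
    (Finset.le_sup (f := fun i ↦ ∑ j, (A i j).natAbs) (Finset.mem_univ i))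

theorem omegaVec_le {x : Fin n → ℝ} (hx : x ≠ 0) {c : ℝ}
    (h : ∀ i j, x i ≠ 0 → |x j| ≤ c * |x i|) : omegaVec x ≤ c := by
  obtain ⟨k, hk⟩ := Function.ne_iff.1 hx
  refine csSup_le ⟨_, k, k, hk, rfl⟩ ?_
  rintro _ ⟨i, j, hi, rfl⟩
  exact (div_le_iff₀ (abs_pos.2 hi)).2 (h i j hi)

end RelativeMagnitude

theorem stmt8_general {m n : ℕ} (A : Matrix (Fin m) (Fin n) ℤ)
    (x : Fin n → ℝ) (hx : x ≠ 0)
    (hker : (A.map (Int.cast : ℤ → ℝ)).mulVec x = 0)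
    (helem : ∀ y : Fin n → ℝ, y ≠ 0 → (A.map (Int.cast : ℤ → ℝ)).mulVec y = 0 →
      {i | y i ≠ 0} ⊆ {i | x i ≠ 0} → {i | y i ≠ 0} = {i | x i ≠ 0}) :
    {i | x i ≠ 0}.ncard - 1 ≤ (A.map (Int.cast : ℤ → ℝ)).rank ∧
    omegaVec x ≤ ((normInf A : ℝ) - 1) ^ ({i | x i ≠ 0}.ncard - 1) := by
  have hxA : IsElementary (LinearMap.ker (A.map (Int.cast : ℤ → ℝ)).mulVecLin) x :=
    ⟨hker, hx, fun y hy hne ↦ helem y hne hy⟩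
  exact ⟨hxA.ncard_support_sub_one_le_rank,
    omegaVec_le hx fun i j hi ↦ hxA.abs_apply_le (sum_abs_le_normInf A) hi j⟩

theorem stmt8 {m n : ℕ} (A : Matrix (Fin m) (Fin n) ℤ)
    (hrank : (A.map (Int.cast : ℤ → ℝ)).rank ≤ n - 1)
    (hnorm : 3 ≤ normInf A)
    (x : Fin n → ℝ) (hx : x ≠ 0)
    (hker : (A.map (Int.cast : ℤ → ℝ)).mulVec x = 0)
    (helem : ∀ y : Fin n → ℝ, y ≠ 0 → (A.map (Int.cast : ℤ → ℝ)).mulVec y = 0 →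
      {i | y i ≠ 0} ⊆ {i | x i ≠ 0} → {i | y i ≠ 0} = {i | x i ≠ 0}) :
    {i | x i ≠ 0}.ncard - 1 ≤ (A.map (Int.cast : ℤ → ℝ)).rank ∧
    omegaVec x ≤ ((normInf A : ℝ) - 1) ^ ({i | x i ≠ 0}.ncard - 1) :=
  stmt8_general A x hx hker helem
end
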